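/- The matrix π₃ satisfies the orthogonality relations defining A_q(B₃): for all 1 ≤ i,m ≤ 7 one has Σ_{j,k,l=1}^{7} C_{jk} C_{lm} π₃(t_{ij}) ∘ π₃(t_{lk}) = δ_{i,m}·id_F and Σ_{j,k,l=1}^{7} C_{ij} C_{kl} π₃(t_{kj}) ∘ π₃(t_{lm}) = δ_{i,m}·id_F as operators on F. -/

import Mathlib

open TensorProduct

noncomputable section

abbrev Fq : Type := RatFunc ℚ

def q : Fq := RatFunc.X

abbrev F : Type := ℕ →₀ Fq

def ket (m : ℕ) : F := Finsupp.single m 1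

/-- Linear operator on the Fock space from its action on the basis. -/
def opOf (v : ℕ → F) : F →ₗ[Fq] F := Finsupp.lift F Fq ℕ v

/-- q²-oscillator K -/
def K2 : F →ₗ[Fq] F := opOf fun m => q ^ (2 * m) • ket m
/-- q²-oscillator A⁺ -/
def Ap : F →ₗ[Fq] F := opOf fun m => ket (m + 1)
/-- q²-oscillator A⁻ -/
def Am : F →ₗ[Fq] F := opOf fun m => (1 - q ^ (4 * m)) • ket (m - 1)
/-- q-oscillator k -/
def kk : F →ₗ[Fq] F := opOf fun m => q ^ m • ket m
/-- q-oscillator a⁺ -/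
def ap : F →ₗ[Fq] F := opOf fun m => ket (m + 1)
/-- q-oscillator a⁻ -/
def am : F →ₗ[Fq] F := opOf fun m => (1 - q ^ (2 * m)) • ket (m - 1)

def pi1 (α β μ ν κ σ : Fq) : Matrix (Fin 7) (Fin 7) (F →ₗ[Fq] F) :=
  !![μ • Am, α • K2, 0, 0, 0, 0, 0;
     β • K2, ν • Ap, 0, 0, 0, 0, 0;
     0, 0, κ • LinearMap.id, 0, 0, 0, 0;
     0, 0, 0, σ • LinearMap.id, 0, 0, 0;
     0, 0, 0, 0, κ⁻¹ • LinearMap.id, 0, 0;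
     0, 0, 0, 0, 0, ν⁻¹ • Am, (q ^ 2 * β⁻¹) • K2;
     0, 0, 0, 0, 0, (q ^ 2 * α⁻¹) • K2, μ⁻¹ • Ap]

def pi2 (α β μ ν κ σ : Fq) : Matrix (Fin 7) (Fin 7) (F →ₗ[Fq] F) :=
  !![κ • LinearMap.id, 0, 0, 0, 0, 0, 0;
     0, μ • Am, α • K2, 0, 0, 0, 0;
     0, β • K2, ν • Ap, 0, 0, 0, 0;
     0, 0, 0, σ • LinearMap.id, 0, 0, 0;
     0, 0, 0, 0, ν⁻¹ • Am, (q ^ 2 * β⁻¹) • K2, 0;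
     0, 0, 0, 0, (q ^ 2 * α⁻¹) • K2, μ⁻¹ • Ap, 0;
     0, 0, 0, 0, 0, 0, κ⁻¹ • LinearMap.id]

def pi3 (α μ κa κb : Fq) : Matrix (Fin 7) (Fin 7) (F →ₗ[Fq] F) :=
  !![κa • LinearMap.id, 0, 0, 0, 0, 0, 0;
     0, κb • LinearMap.id, 0, 0, 0, 0, 0;
     0, 0, μ • (am ∘ₗ am), α • (kk ∘ₗ am), (-((1 + q ^ 2) * μ)⁻¹ * α ^ 2) • (kk ∘ₗ kk), 0, 0;
     0, 0, (-(1 + q ^ 2) * α⁻¹ * μ) • (am ∘ₗ kk), am ∘ₗ ap - kk ∘ₗ kk, (-(q * μ)⁻¹ * α) • (kk ∘ₗ ap), 0, 0;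
     0, 0, (-(1 + q ^ 2) * q ^ 2 * α⁻¹ ^ 2 * μ) • (kk ∘ₗ kk), ((1 + q ^ 2) * α⁻¹) • (kk ∘ₗ ap), μ⁻¹ • (ap ∘ₗ ap), 0, 0;
     0, 0, 0, 0, 0, κb⁻¹ • LinearMap.id, 0;
     0, 0, 0, 0, 0, 0, κa⁻¹ • LinearMap.id]

def rhoB : Fin 7 → ℤ := ![5, 3, 1, 0, -1, -3, -5]

def CB : Matrix (Fin 7) (Fin 7) Fq := fun i j => if (i : ℕ) + (j : ℕ) = 6 then q ^ rhoB j else 0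

theorem opOf_single (v : ℕ → F) (n : ℕ) (c : Fq) :
    opOf v (Finsupp.single n c) = c • v n := by
  simp [opOf]

theorem kk_single (n : ℕ) (c : Fq) :
    kk (Finsupp.single n c) = Finsupp.single n (c * q ^ n) := by
  simp [kk, opOf_single, ket]

theorem ap_single (n : ℕ) (c : Fq) :
    ap (Finsupp.single n c) = Finsupp.single (n + 1) c := by
  simp [ap, opOf_single, ket]

theorem am_single_zero (c : Fq) : am (Finsupp.single 0 c) = 0 := by
  simp [am, opOf_single, ket]

theorem am_single_succ (n : ℕ) (c : Fq) :
    am (Finsupp.single (n + 1) c) = Finsupp.single n (c * (1 - q ^ (2 * (n + 1)))) := by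
  simp [am, opOf_single, ket, -Finsupp.single_sub, -Finsupp.single_mul]

theorem am_single_one (c : Fq) :
    am (Finsupp.single 1 c) = Finsupp.single 0 (c * (1 - q ^ 2)) := by
  simp [am, opOf_single, ket, -Finsupp.single_sub, -Finsupp.single_mul]

theorem q_ne : q ≠ 0 := RatFunc.X_ne_zero

theorem one_add_q_sq_ne : 1 + q ^ 2 ≠ 0 := by
  have h : (1 + q ^ 2 : Fq) = algebraMap (Polynomial ℚ) Fq (1 + Polynomial.X ^ 2) := by
    simp [q, RatFunc.algebraMap_X]
  rw [h]
  intro h0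
  have h1 : (1 + Polynomial.X ^ 2 : Polynomial ℚ) = 0 :=
    RatFunc.algebraMap_injective ℚ (by rw [h0, map_zero])
  have h2 := congrArg (Polynomial.eval 0) h1
  simp at h2

theorem CB_eq (i j : Fin 7) : CB i j = if i = j.rev then q ^ rhoB j else 0 := by
  unfold CB
  congr 1
  rw [Fin.ext_iff, Fin.val_rev]
  apply propext
  omega

theorem CB_eq' (i j : Fin 7) : CB i j = if j = i.rev then q ^ rhoB j else 0 := by
  unfold CB
  congr 1
  rw [Fin.ext_iff, Fin.val_rev]
  apply propext
  omega

theorem collapse_left (t : Matrix (Fin 7) (Fin 7) (F →ₗ[Fq] F)) (i m : Fin 7) :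
    (∑ j : Fin 7, ∑ k : Fin 7, ∑ l : Fin 7, (CB j k * CB l m) • (t i j ∘ₗ t l k))
      = ∑ j : Fin 7, (q ^ rhoB j.rev * q ^ rhoB m) • (t i j ∘ₗ t m.rev j.rev) := by
  refine Finset.sum_congr rfl fun j _ => ?_
  rw [Finset.sum_eq_single j.rev, Finset.sum_eq_single m.rev]
  · simp [CB_eq]
  · intro l _ hl
    simp [CB_eq, hl]
  · simp
  · intro k _ hk
    simp [CB_eq', hk]
  · simp

theorem collapse_right (t : Matrix (Fin 7) (Fin 7) (F →ₗ[Fq] F)) (i m : Fin 7) :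
    (∑ j : Fin 7, ∑ k : Fin 7, ∑ l : Fin 7, (CB i j * CB k l) • (t k j ∘ₗ t l m))
      = ∑ k : Fin 7, (q ^ rhoB i.rev * q ^ rhoB k.rev) • (t k i.rev ∘ₗ t k.rev m) := by
  rw [Finset.sum_eq_single i.rev]
  · refine Finset.sum_congr rfl fun k _ => ?_
    rw [Finset.sum_eq_single k.rev]
    · simp [CB_eq]
    · intro l _ hl
      simp [CB_eq', hl]
    · simp
  · intro j _ hj
    simp [CB_eq', hj]
  · simp

set_option maxHeartbeats 4000000 in
/-- the matrix π₃ satisfies the orthogonality relations defining A_q(B₃). -/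
theorem pi3_orthogonality
    (α μ κa κb : Fq) (hα : α ≠ 0) (hμ : μ ≠ 0) (hκa : κa ≠ 0) (hκb : κb ≠ 0) :
    ∀ i m : Fin 7,
      ((∑ j : Fin 7, ∑ k : Fin 7, ∑ l : Fin 7,
        (CB j k * CB l m) • (pi3 α μ κa κb i j ∘ₗ pi3 α μ κa κb l k))
        = if i = m then LinearMap.id else 0) ∧
      ((∑ j : Fin 7, ∑ k : Fin 7, ∑ l : Fin 7,
        (CB i j * CB k l) • (pi3 α μ κa κb k j ∘ₗ pi3 α μ κa κb l m))
        = if i = m then LinearMap.id else 0) := by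
  have hq := q_ne
  have hr := one_add_q_sq_ne
  intro i m
  rw [collapse_left, collapse_right]
  constructor
  all_goals
    fin_cases i <;> fin_cases m <;>
    simp [Fin.sum_univ_seven, pi3, rhoB, Fin.rev, hα, hμ, hκa, hκb, hq, LinearMap.comp_smul, LinearMap.smul_comp,
      smul_smul]
  all_goals
    apply Finsupp.lhom_ext
    intro n c
    rcases n with _ | _ | n
  all_goals
    simp [kk_single, ap_single, am_single_zero, am_single_one, am_single_succ,
      -Finsupp.single_add, -Finsupp.single_sub, -Finsupp.single_neg, -Finsupp.single_mul,
      ← Finsupp.single_add, ← Finsupp.single_sub, ← Finsupp.single_neg]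
  all_goals try
    first
    | congr 1
      field_simp
      ring
    | field_simp
      ring
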